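/- Let p ∈ (0,1/2], r ∈ ℕ with r ≥ 1, and δ > 0. Suppose f : {0,1}^n → {0,1} is (r,δ)-global and μ_p(f) ≤ δ. Then for all S ⊆ [n] with |S| ≤ r one has I_S(f^{≤r}) ≤ I_S(f) ≤ 8^r·δ. -/

import Mathlib

open Finset

namespace GlobalHC

variable {n : ℕ}

/-- Expectation with respect to the `p`-biased measure on `{0,1}^n`. -/
noncomputable def Ep (p : ℝ) (f : (Fin n → Bool) → ℝ) : ℝ :=
  ∑ x : Fin n → Bool, (∏ i, if x i then p else 1 - p) * f x

/-- The `r`-norm with respect to the `p`-biased measure. -/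
noncomputable def pnorm (p r : ℝ) (f : (Fin n → Bool) → ℝ) : ℝ :=
  (Ep p fun x => |f x| ^ r) ^ (1 / r)

/-- The `p`-biased character `χ_S`. -/
noncomputable def chi (p : ℝ) (S : Finset (Fin n)) (x : Fin n → Bool) : ℝ :=
  ∏ i ∈ S, ((if x i then (1 : ℝ) else 0) - p) / Real.sqrt (p * (1 - p))

/-- The `p`-biased Fourier coefficient `f̂(S)`. -/
noncomputable def coeff (p : ℝ) (f : (Fin n → Bool) → ℝ) (S : Finset (Fin n)) : ℝ :=
  Ep p fun x => f x * chi p S x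

/-- The derivative `D_S f = Σ_{T ⊇ S} f̂(T) χ_{T∖S}`. -/
noncomputable def derivS (p : ℝ) (S : Finset (Fin n)) (f : (Fin n → Bool) → ℝ) :
    (Fin n → Bool) → ℝ :=
  fun x => ∑ T ∈ Finset.univ.filter (fun T => S ⊆ T), coeff p f T * chi p (T \ S) x

/-- The generalised influence `I_S(f) = σ^{-2|S|} Σ_{T ⊇ S} f̂(T)²`. -/
noncomputable def genInf (p : ℝ) (S : Finset (Fin n)) (f : (Fin n → Bool) → ℝ) : ℝ :=
  (∑ T ∈ Finset.univ.filter (fun T => S ⊆ T), coeff p f T ^ 2) / (p * (1 - p)) ^ S.card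

/-- The noise operator `T_ρ f = Σ_S ρ^{|S|} f̂(S) χ_S`. -/
noncomputable def noise (p ρ : ℝ) (f : (Fin n → Bool) → ℝ) : (Fin n → Bool) → ℝ :=
  fun x => ∑ S : Finset (Fin n), ρ ^ S.card * coeff p f S * chi p S x

/-- The degree-`r` truncation `f^{≤ r}`. -/
noncomputable def trunc (p : ℝ) (r : ℕ) (f : (Fin n → Bool) → ℝ) : (Fin n → Bool) → ℝ :=
  fun x => ∑ S ∈ Finset.univ.filter (fun S : Finset (Fin n) => S.card ≤ r),
    coeff p f S * chi p S x

/-- The restriction `f_{J→1}` setting all coordinates in `J` to `1`. -/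
def restrict1 (J : Finset (Fin n)) (f : (Fin n → Bool) → ℝ) : (Fin n → Bool) → ℝ :=
  fun x => f (fun i => if i ∈ J then true else x i)

/-- `f` is `(r,δ)`-global (for the `p`-biased measure). -/
def IsGlobal (p r δ : ℝ) (f : (Fin n → Bool) → ℝ) : Prop :=
  ∀ J : Finset (Fin n), (J.card : ℝ) ≤ r → Ep p (restrict1 J f) ≤ Ep p f + δ

/-- The total influence `I[f] = Σ_i Pr_{μ_p}[f(x ⊕ e_i) ≠ f(x)]`. -/
noncomputable def totalInf (p : ℝ) (f : (Fin n → Bool) → ℝ) : ℝ :=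
  ∑ i : Fin n, Ep p fun x => if f (Function.update x i (!x i)) = f x then 0 else 1

/-- Noise stability `Stab_ρ(f) = Σ_S ρ^{|S|} f̂(S)²` (w.r.t. `μ_p`). -/
noncomputable def stab (p ρ : ℝ) (f : (Fin n → Bool) → ℝ) : ℝ :=
  ∑ S : Finset (Fin n), ρ ^ S.card * coeff p f S ^ 2

/-- `f` is monotone. -/
def Mono (f : (Fin n → Bool) → ℝ) : Prop :=
  ∀ x y : Fin n → Bool, (∀ i, x i ≤ y i) → f x ≤ f y

/-!
With `∂ᵢf = f_{i→1} - f_{i→0}` one has `I_{S ∪ {i}}(f) = I_S(∂ᵢf)` for `i ∉ S`, so `|S|` such steps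
reduce `I_S` to `I_∅(g) ≤ ‖g‖₂²`. The hypothesis carried along is `‖f_{J→1}‖₂² ≤ a^|J| M` for all
`J ⊆ S`. Averaging over the coordinate `i` gives `(1 - p) ‖f_{i→0}‖₂² ≤ ‖f‖₂²`, hence
`‖(∂ᵢf)_{J→1}‖₂² ≤ 2 (‖f_{J∪{i}→1}‖₂² + ‖f_{J→1}‖₂² / (1 - p)) ≤ a^|J| · 2 (a + 1 / (1 - p)) M`,
so each step costs a factor `2 (a + 1 / (1 - p))`. A sparse global function satisfies the hypothesis
with `a = 2` and `M = δ`, and for `p ≤ 1/2` the factor is then at most `8`.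
-/

lemma Ep_add (p : ℝ) (f g : (Fin n → Bool) → ℝ) :
    Ep p (fun x => f x + g x) = Ep p f + Ep p g := by
  simp only [Ep, mul_add, sum_add_distrib]

lemma Ep_const_mul (p c : ℝ) (f : (Fin n → Bool) → ℝ) :
    Ep p (fun x => c * f x) = c * Ep p f := by
  simp only [Ep, mul_sum, mul_left_comm]

lemma Ep_sum {ι : Type*} (p : ℝ) (A : Finset ι) (F : ι → (Fin n → Bool) → ℝ) :
    Ep p (fun x => ∑ a ∈ A, F a x) = ∑ a ∈ A, Ep p (F a) := by
  simp only [Ep, mul_sum]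
  exact sum_comm

lemma Ep_mono {p : ℝ} (hp₀ : 0 ≤ p) (hp₁ : p ≤ 1) {f g : (Fin n → Bool) → ℝ}
    (hfg : ∀ x, f x ≤ g x) : Ep p f ≤ Ep p g := by
  refine sum_le_sum fun x _ => mul_le_mul_of_nonneg_left (hfg x) (prod_nonneg fun i _ => ?_)
  split_ifs <;> linarith

lemma Ep_nonneg {p : ℝ} (hp₀ : 0 ≤ p) (hp₁ : p ≤ 1) {f : (Fin n → Bool) → ℝ}
    (hf : ∀ x, 0 ≤ f x) : 0 ≤ Ep p f := by
  simpa [Ep] using Ep_mono hp₀ hp₁ hf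

lemma Ep_prod (p : ℝ) (g : Fin n → Bool → ℝ) :
    Ep p (fun x => ∏ i, g i (x i)) = ∏ i, (p * g i true + (1 - p) * g i false) := by
  simp only [Ep, ← prod_mul_distrib]
  rw [← Fintype.piFinset_univ, ← prod_univ_sum (fun _ => univ)
    fun i b => (if b then p else 1 - p) * g i b]
  simp

lemma sum_eq_sum_update_not {ι M : Type*} [Fintype ι] [DecidableEq ι] [AddCommMonoid M] (i : ι)
    (F : (ι → Bool) → M) : ∑ x, F x = ∑ x, F (Function.update x i (!x i)) := by
  have hflip : Function.Involutive fun x : ι → Bool => Function.update x i (!x i) :=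
    fun x => by simp
  exact (Equiv.sum_comp hflip.toPerm F).symm

lemma weight_update (p : ℝ) (i : Fin n) (x : Fin n → Bool) (b : Bool) :
    (∏ j, if Function.update x i b j then p else 1 - p)
      = (if b then p else 1 - p) * ∏ j ∈ univ.erase i, if x j then p else 1 - p := by
  rw [← mul_prod_erase univ _ (mem_univ i), Function.update_self]
  congr 1
  refine prod_congr rfl fun j hj => ?_
  rw [Function.update_of_ne (ne_of_mem_erase hj)]

lemma Ep_eq_Ep_update (p : ℝ) (i : Fin n) (f : (Fin n → Bool) → ℝ) :
    Ep p f = Ep p fun x =>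
      p * f (Function.update x i true) + (1 - p) * f (Function.update x i false) := by
  -- Pairing each point with its flip in direction `i`, the identity holds pair by pair.
  have two_mul_sum (F : (Fin n → Bool) → ℝ) :
      2 * ∑ x, F x = ∑ x, (F (Function.update x i (x i)) + F (Function.update x i (!x i))) := by
    simp only [sum_add_distrib, Function.update_eq_self, ← sum_eq_sum_update_not, two_mul]
  refine mul_left_cancel₀ (two_ne_zero (α := ℝ)) ?_
  simp only [Ep, two_mul_sum]
  refine sum_congr rfl fun x _ => ?_
  simp only [weight_update, Function.update_idem]
  cases x i <;> simp <;> ring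

lemma Ep_update_false_le {p : ℝ} (hp₀ : 0 ≤ p) (hp₁ : p < 1) (i : Fin n)
    {f : (Fin n → Bool) → ℝ} (hf : ∀ x, 0 ≤ f x) :
    Ep p (fun x => f (Function.update x i false)) ≤ Ep p f / (1 - p) := by
  rw [le_div_iff₀' (sub_pos.2 hp₁), Ep_eq_Ep_update p i f, ← Ep_const_mul]
  exact Ep_mono hp₀ hp₁.le fun x => le_add_of_nonneg_left (mul_nonneg hp₀ (hf _))

/-! ### Fourier coefficients -/

/-- The one-coordinate character `χᵢ`, as a function of the bit `xᵢ`. -/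
noncomputable def bitChi (p : ℝ) (b : Bool) : ℝ :=
  ((if b then 1 else 0) - p) / √(p * (1 - p))

lemma chi_eq_prod_bitChi (p : ℝ) (S : Finset (Fin n)) (x : Fin n → Bool) :
    chi p S x = ∏ i ∈ S, bitChi p (x i) := rfl

lemma mul_bitChi_true (p : ℝ) : p * bitChi p true = √(p * (1 - p)) := by
  simp only [bitChi, if_true, ← mul_div_assoc, Real.div_sqrt]

lemma mul_bitChi_false (p : ℝ) : (1 - p) * bitChi p false = -√(p * (1 - p)) := by
  simp only [bitChi, Bool.false_eq_true, if_false, zero_sub, neg_div, mul_neg, ← mul_div_assoc,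
    mul_comm (1 - p) p, Real.div_sqrt]

lemma bitChi_mean (p : ℝ) : p * bitChi p true + (1 - p) * bitChi p false = 0 := by
  rw [mul_bitChi_true, mul_bitChi_false, add_neg_cancel]

lemma bitChi_second_moment {p : ℝ} (hp₀ : 0 < p) (hp₁ : p < 1) :
    p * (bitChi p true * bitChi p true) + (1 - p) * (bitChi p false * bitChi p false) = 1 := by
  have hσ : √(p * (1 - p)) ≠ 0 := (Real.sqrt_pos.2 (mul_pos hp₀ (sub_pos.2 hp₁))).ne'
  have hgap : √(p * (1 - p)) * (bitChi p true - bitChi p false) = 1 := by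
    simp only [bitChi, if_true, Bool.false_eq_true, if_false, ← sub_div, mul_div_cancel₀ _ hσ]
    ring
  linear_combination
    bitChi p true * mul_bitChi_true p + bitChi p false * mul_bitChi_false p + hgap

lemma chi_update_of_notMem (p : ℝ) {T : Finset (Fin n)} {i : Fin n} (hi : i ∉ T)
    (x : Fin n → Bool) (b : Bool) : chi p T (Function.update x i b) = chi p T x :=
  prod_congr rfl fun j hj => by rw [Function.update_of_ne (ne_of_mem_of_not_mem hj hi)]

lemma chi_insert_update (p : ℝ) {T : Finset (Fin n)} {i : Fin n} (hi : i ∉ T)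
    (x : Fin n → Bool) (b : Bool) :
    chi p (insert i T) (Function.update x i b) = bitChi p b * chi p T x := by
  rw [chi_eq_prod_bitChi, prod_insert hi, Function.update_self, ← chi_eq_prod_bitChi,
    chi_update_of_notMem p hi]

lemma coeff_chi {p : ℝ} (hp₀ : 0 < p) (hp₁ : p < 1) (S T : Finset (Fin n)) :
    coeff p (chi p S) T = if S = T then 1 else 0 := by
  let factor (i : Fin n) (b : Bool) : ℝ :=
    (if i ∈ S then bitChi p b else 1) * if i ∈ T then bitChi p b else 1
  have hprod (x : Fin n → Bool) : chi p S x * chi p T x = ∏ i, factor i (x i) := by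
    simp only [factor, chi_eq_prod_bitChi, prod_mul_distrib, prod_ite_mem, univ_inter]
  have hmean (i : Fin n) :
      p * factor i true + (1 - p) * factor i false = if i ∈ S ↔ i ∈ T then 1 else 0 := by
    by_cases hS : i ∈ S <;> by_cases hT : i ∈ T <;>
      simp [factor, hS, hT, bitChi_mean, bitChi_second_moment hp₀ hp₁]
  simp only [coeff, hprod, Ep_prod, hmean, prod_ite_zero, prod_const_one, mem_univ, true_imp_iff,
    Finset.ext_iff]

lemma Ep_mul_sum_chi (p : ℝ) (f : (Fin n → Bool) → ℝ) (A : Finset (Finset (Fin n)))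
    (c : Finset (Fin n) → ℝ) :
    Ep p (fun x => f x * ∑ S ∈ A, c S * chi p S x) = ∑ S ∈ A, c S * coeff p f S := by
  simp only [mul_sum, Ep_sum, coeff, ← Ep_const_mul, mul_left_comm]

lemma coeff_sum_chi {p : ℝ} (hp₀ : 0 < p) (hp₁ : p < 1) (A : Finset (Finset (Fin n)))
    (c : Finset (Fin n) → ℝ) (T : Finset (Fin n)) :
    coeff p (fun x => ∑ S ∈ A, c S * chi p S x) T = if T ∈ A then c T else 0 := by
  simp only [coeff, mul_comm _ (chi p T _)]
  simp [Ep_mul_sum_chi, coeff_chi hp₀ hp₁]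

lemma sum_coeff_sq_le {p : ℝ} (hp₀ : 0 < p) (hp₁ : p < 1) (f : (Fin n → Bool) → ℝ) :
    ∑ T, coeff p f T ^ 2 ≤ Ep p fun x => f x ^ 2 := by
  set g : (Fin n → Bool) → ℝ := fun x => ∑ S, coeff p f S * chi p S x with hg
  have hcoeff_g (T) : coeff p g T = coeff p f T := by simp [hg, coeff_sum_chi hp₀ hp₁]
  have hfg : Ep p (fun x => f x * g x) = ∑ T, coeff p f T ^ 2 := by
    simp only [hg, Ep_mul_sum_chi, pow_two]
  have hgg : Ep p (fun x => g x * g x) = ∑ T, coeff p f T ^ 2 := by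
    simpa only [hcoeff_g, pow_two] using Ep_mul_sum_chi p g univ (coeff p f)
  have hdist : Ep p (fun x => (f x - g x) ^ 2)
      = Ep p (fun x => f x ^ 2) + (-2 * Ep p (fun x => f x * g x) + Ep p fun x => g x * g x) := by
    simp only [← Ep_const_mul, ← Ep_add]
    congr! 2
    ring
  have hdist_nonneg : 0 ≤ Ep p fun x => (f x - g x) ^ 2 :=
    Ep_nonneg hp₀.le hp₁.le fun x => sq_nonneg _
  linarith

lemma genInf_empty_le {p : ℝ} (hp₀ : 0 < p) (hp₁ : p < 1) (f : (Fin n → Bool) → ℝ) :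
    genInf p ∅ f ≤ Ep p fun x => f x ^ 2 := by
  simpa [genInf] using sum_coeff_sq_le hp₀ hp₁ f

lemma genInf_trunc_le {p : ℝ} (hp₀ : 0 < p) (hp₁ : p < 1) (d : ℕ) (S : Finset (Fin n))
    (f : (Fin n → Bool) → ℝ) : genInf p S (trunc p d f) ≤ genInf p S f := by
  have : 0 < p * (1 - p) := mul_pos hp₀ (sub_pos.2 hp₁)
  refine div_le_div_of_nonneg_right (sum_le_sum fun T _ => ?_) (by positivity)
  rw [show coeff p (trunc p d f) T = _ from coeff_sum_chi hp₀ hp₁ _ _ T]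
  split_ifs
  · rfl
  · simpa using sq_nonneg (coeff p f T)

/-! ### Discrete derivatives -/

/-- The discrete derivative `∂ᵢf = f_{i→1} - f_{i→0}`, which is `D_{i} f / σ`. It is kept as a
function on the whole cube (constant in the coordinate `i`), so that it can be iterated. -/
def discreteDeriv (i : Fin n) (f : (Fin n → Bool) → ℝ) : (Fin n → Bool) → ℝ :=
  fun x => f (Function.update x i true) - f (Function.update x i false)

lemma coeff_insert (p : ℝ) {T : Finset (Fin n)} {i : Fin n} (hi : i ∉ T)
    (f : (Fin n → Bool) → ℝ) :
    coeff p f (insert i T) = √(p * (1 - p)) * coeff p (discreteDeriv i f) T := by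
  rw [coeff, Ep_eq_Ep_update p i, coeff, ← Ep_const_mul]
  congr 1
  funext x
  simp only [chi_insert_update p hi, discreteDeriv]
  linear_combination
    f (Function.update x i true) * chi p T x * mul_bitChi_true p
      + f (Function.update x i false) * chi p T x * mul_bitChi_false p

lemma coeff_discreteDeriv_of_mem (p : ℝ) {T : Finset (Fin n)} {i : Fin n} (hi : i ∈ T)
    (f : (Fin n → Bool) → ℝ) : coeff p (discreteDeriv i f) T = 0 := by
  rw [← insert_erase hi, coeff, Ep_eq_Ep_update p i]
  simp only [chi_insert_update p (notMem_erase i T), discreteDeriv, Function.update_idem]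
  refine sum_eq_zero fun x _ => mul_eq_zero_of_right _ ?_
  linear_combination
    (f (Function.update x i true) - f (Function.update x i false)) * chi p (T.erase i) x
      * bitChi_mean p

lemma genInf_insert {p : ℝ} (hp₀ : 0 < p) (hp₁ : p < 1) {S : Finset (Fin n)} {i : Fin n}
    (hi : i ∉ S) (f : (Fin n → Bool) → ℝ) :
    genInf p (insert i S) f = genInf p S (discreteDeriv i f) := by
  have hvar : 0 < p * (1 - p) := mul_pos hp₀ (sub_pos.2 hp₁)
  have hsum : ∑ T with insert i S ⊆ T, coeff p f T ^ 2
      = ∑ T with S ⊆ T, p * (1 - p) * coeff p (discreteDeriv i f) T ^ 2 := by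
    have hmem {T : Finset (Fin n)} (hT : T ∈ ({T | insert i S ⊆ T} : Finset _)) : i ∈ T :=
      (mem_filter_univ T |>.1 hT) (mem_insert_self i S)
    refine sum_of_injOn (fun T => T.erase i) ?_ ?_ ?_ ?_
    · intro T hT U hU hTU
      exact erase_injOn' i (hmem hT) (hmem hU) hTU
    · intro T hT
      have hST : S ⊆ T := (subset_insert i S).trans (mem_filter_univ T |>.1 hT)
      exact mem_filter_univ _ |>.2 (subset_erase.2 ⟨hST, hi⟩)
    · intro U hU hU_image
      have hiU : i ∈ U := by
        by_contra hiU
        refine hU_image ⟨insert i U, ?_, erase_insert hiU⟩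
        simpa using insert_subset_insert i (mem_filter.1 hU).2
      rw [coeff_discreteDeriv_of_mem p hiU]
      simp
    · intro T hT
      conv_lhs => rw [← insert_erase (hmem hT)]
      rw [coeff_insert p (notMem_erase i T), mul_pow, Real.sq_sqrt hvar.le]
  rw [genInf, genInf, hsum, ← mul_sum, card_insert_of_notMem hi, pow_succ',
    mul_div_mul_left _ _ hvar.ne']

lemma restrict1_empty (f : (Fin n → Bool) → ℝ) : restrict1 ∅ f = f :=
  funext fun x => by simp [restrict1]

lemma restrict1_discreteDeriv {J : Finset (Fin n)} {i : Fin n} (hi : i ∉ J)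
    (f : (Fin n → Bool) → ℝ) (x : Fin n → Bool) :
    restrict1 J (discreteDeriv i f) x
      = restrict1 (insert i J) f x - restrict1 J f (Function.update x i false) := by
  simp only [restrict1, discreteDeriv]
  congr! 2 <;> funext j <;> by_cases hj : j = i <;> simp_all

lemma Ep_sq_restrict1_discreteDeriv_le {p : ℝ} (hp₀ : 0 ≤ p) (hp₁ : p < 1)
    {J : Finset (Fin n)} {i : Fin n} (hi : i ∉ J) (f : (Fin n → Bool) → ℝ) :
    Ep p (fun x => restrict1 J (discreteDeriv i f) x ^ 2)
      ≤ 2 * (Ep p (fun x => restrict1 (insert i J) f x ^ 2)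
        + Ep p (fun x => restrict1 J f x ^ 2) / (1 - p)) := by
  calc Ep p (fun x => restrict1 J (discreteDeriv i f) x ^ 2)
      ≤ Ep p fun x => 2 * (restrict1 (insert i J) f x ^ 2
          + restrict1 J f (Function.update x i false) ^ 2) := by
        refine Ep_mono hp₀ hp₁.le fun x => ?_
        rw [restrict1_discreteDeriv hi, sub_eq_add_neg, ← neg_sq (restrict1 J f _)]
        exact add_sq_le
    _ = 2 * (Ep p (fun x => restrict1 (insert i J) f x ^ 2)
          + Ep p fun x => restrict1 J f (Function.update x i false) ^ 2) := by
        rw [Ep_const_mul, Ep_add]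
    _ ≤ _ := by
        gcongr
        exact Ep_update_false_le (f := fun x => restrict1 J f x ^ 2) hp₀ hp₁ i fun x => sq_nonneg _

lemma genInf_le_of_Ep_sq_restrict1_le {p : ℝ} (hp₀ : 0 < p) (hp₁ : p < 1) (a : ℝ) {M : ℝ}
    {S : Finset (Fin n)} {f : (Fin n → Bool) → ℝ}
    (hf : ∀ J ⊆ S, Ep p (fun x => restrict1 J f x ^ 2) ≤ a ^ #J * M) :
    genInf p S f ≤ (2 * (a + 1 / (1 - p))) ^ #S * M := by
  induction S using Finset.induction_on generalizing f M with
  | empty =>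
    simpa [restrict1_empty] using (genInf_empty_le hp₀ hp₁ f).trans (hf ∅ subset_rfl)
  | insert i S hi ih =>
    have hderiv : ∀ J ⊆ S, Ep p (fun x => restrict1 J (discreteDeriv i f) x ^ 2)
        ≤ a ^ #J * (2 * (a + 1 / (1 - p)) * M) := by
      intro J hJ
      have hiJ : i ∉ J := notMem_mono hJ hi
      have : 0 < 1 - p := sub_pos.2 hp₁
      calc _ ≤ _ := Ep_sq_restrict1_discreteDeriv_le hp₀.le hp₁ hiJ f
        _ ≤ 2 * (a ^ #(insert i J) * M + a ^ #J * M / (1 - p)) := by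
          gcongr
          · exact hf _ (insert_subset_insert i hJ)
          · exact hf _ (hJ.trans (subset_insert i S))
        _ = a ^ #J * (2 * (a + 1 / (1 - p)) * M) := by
          rw [card_insert_of_notMem hiJ, pow_succ]
          ring
    rw [genInf_insert hp₀ hp₁ hi, card_insert_of_notMem hi, pow_succ, mul_assoc]
    exact ih hderiv

/-! ### Sparse global functions -/

lemma Ep_sq_restrict1_le {p : ℝ} (hp₀ : 0 ≤ p) (hp₁ : p ≤ 1) {f : (Fin n → Bool) → ℝ}
    (hf : ∀ x, f x ∈ Set.Icc 0 1) (J : Finset (Fin n)) :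
    Ep p (fun x => restrict1 J f x ^ 2) ≤ Ep p (restrict1 J f) :=
  Ep_mono hp₀ hp₁ fun _ => pow_le_of_le_one (hf _).1 (hf _).2 two_ne_zero

lemma IsGlobal.Ep_restrict1_le {p r δ : ℝ} {f : (Fin n → Bool) → ℝ} (hglob : IsGlobal p r δ f)
    (hδ : 0 ≤ δ) (hmeas : Ep p f ≤ δ) {J : Finset (Fin n)} (hJ : #J ≤ r) :
    Ep p (restrict1 J f) ≤ 2 ^ #J * δ := by
  obtain rfl | hne := J.eq_empty_or_nonempty
  · simpa [restrict1_empty] using hmeas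
  calc Ep p (restrict1 J f) ≤ Ep p f + δ := hglob J hJ
    _ ≤ 2 * δ := by linarith
    _ ≤ 2 ^ #J * δ := by
      gcongr
      exact le_self_pow₀ one_le_two hne.card_ne_zero

lemma pow_derivative_factor_le {p : ℝ} (hp : p ≤ 1 / 2) {s r : ℕ} (hsr : s ≤ r) :
    (2 * (2 + 1 / (1 - p))) ^ s ≤ 8 ^ r := by
  have hq : 0 < 1 - p := by linarith
  have hinv : 1 / (1 - p) ≤ 2 := (div_le_iff₀ hq).2 (by linarith)
  calc (2 * (2 + 1 / (1 - p))) ^ s ≤ 8 ^ s := pow_le_pow_left₀ (by positivity) (by linarith) s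
    _ ≤ 8 ^ r := pow_le_pow_right₀ (by norm_num) hsr

theorem statement4_general {p δ : ℝ} {r : ℕ} (hp₀ : 0 < p) (hp₁ : p < 1)
    {f : (Fin n → Bool) → ℝ} (hf : ∀ x, f x ∈ Set.Icc 0 1)
    (hglob : IsGlobal p r δ f) (hmeas : Ep p f ≤ δ) {S : Finset (Fin n)} (hS : #S ≤ r) :
    genInf p S (trunc p r f) ≤ genInf p S f ∧
      genInf p S f ≤ (2 * (2 + 1 / (1 - p))) ^ #S * δ := by
  refine ⟨genInf_trunc_le hp₀ hp₁ r S f, genInf_le_of_Ep_sq_restrict1_le hp₀ hp₁ 2 fun J hJ => ?_⟩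
  have hδ : 0 ≤ δ := (Ep_nonneg hp₀.le hp₁.le fun x => (hf x).1).trans hmeas
  have hJr : (#J : ℝ) ≤ r := mod_cast (card_le_card hJ).trans hS
  exact (Ep_sq_restrict1_le hp₀.le hp₁.le hf J).trans (hglob.Ep_restrict1_le hδ hmeas hJr)

/-- sparse global Boolean functions have small generalised influences. -/
theorem statement4 {n : ℕ} (p δ : ℝ) (r : ℕ) (hp : 0 < p) (hp' : p ≤ 1/2)
    (hr : 1 ≤ r) (hδ : 0 < δ)
    (f : (Fin n → Bool) → ℝ) (hbool : ∀ x, f x = 0 ∨ f x = 1)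
    (hglob : IsGlobal p (r : ℝ) δ f) (hmeas : Ep p f ≤ δ) :
    ∀ S : Finset (Fin n), S.card ≤ r →
      genInf p S (trunc p r f) ≤ genInf p S f ∧ genInf p S f ≤ 8 ^ r * δ := by
  intro S hS
  have hf (x) : f x ∈ Set.Icc 0 1 := by rcases hbool x with h | h <;> simp [h]
  exact (statement4_general hp (by linarith) hf hglob hmeas hS).imp_right fun h =>
    h.trans (mul_le_mul_of_nonneg_right (pow_derivative_factor_le hp' hS) hδ.le)

end GlobalHC
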